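/- Suppose g and h are orientation-preserving C² diffeomorphisms of I = [0,1] satisfying g ∘ hᵐ ∘ g⁻¹ = hⁿ for some positive integers m and n. Then h and g ∘ h ∘ g⁻¹ commute. -/

import Mathlib

/-- A permutation of `ℝ` representing an orientation-preserving C² diffeomorphism of
`I = [0,1]`: it is the identity off `[0,1]`, is C² on `[0,1]`, and has positive
(one-sided, at the endpoints) derivative on `[0,1]`. -/
def IsDiffI (f : Equiv.Perm ℝ) : Prop :=
  (∀ x, x ∉ Set.Icc (0 : ℝ) 1 → f x = x) ∧
  ContDiffOn ℝ 2 f (Set.Icc 0 1) ∧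
  ∀ x ∈ Set.Icc (0 : ℝ) 1, 0 < derivWithin f (Set.Icc 0 1) x

open Set Filter Topology Real

theorem perm_apply_inv (f : Equiv.Perm ℝ) (x : ℝ) : f (f⁻¹ x) = x :=
  f.apply_symm_apply x

/-- Identity off `[0,1]` with bounded-distortion estimates. -/
def QI (f : Equiv.Perm ℝ) : Prop :=
  (∀ x, x ∉ Set.Icc (0 : ℝ) 1 → f x = x) ∧
  ∃ (L : ℝ → ℝ) (C : ℝ), 0 ≤ C ∧ ∀ s t x : ℝ, 0 ≤ s → s ≤ x → x ≤ t → t ≤ 1 →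
    Real.exp (L x - C * (t - s)) * (t - s) ≤ f t - f s ∧
    f t - f s ≤ Real.exp (L x + C * (t - s)) * (t - s)

theorem QI.mem {f : Equiv.Perm ℝ} (hf : QI f) {x : ℝ} (hx : x ∈ Icc (0:ℝ) 1) :
    f x ∈ Icc (0:ℝ) 1 := by
  by_contra h
  have := f.injective (hf.1 _ h)
  rw [this] at h
  exact h hx

theorem QI.inv_off {f : Equiv.Perm ℝ} (hf : QI f) {x : ℝ} (hx : x ∉ Icc (0:ℝ) 1) :
    f⁻¹ x = x := by
  rw [Equiv.Perm.inv_eq_iff_eq]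
  exact (hf.1 x hx).symm

theorem QI.inv_mem {f : Equiv.Perm ℝ} (hf : QI f) {x : ℝ} (hx : x ∈ Icc (0:ℝ) 1) :
    f⁻¹ x ∈ Icc (0:ℝ) 1 := by
  by_contra h
  have h2 := hf.1 _ h
  rw [perm_apply_inv] at h2
  rw [← h2] at h
  exact h hx

theorem QI.strictMonoOn {f : Equiv.Perm ℝ} (hf : QI f) : StrictMonoOn f (Icc (0:ℝ) 1) := by
  obtain ⟨_, L, C, _, h⟩ := hf
  intro s hs t ht hst
  have h1 := (h s t s hs.1 le_rfl hst.le ht.2).1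
  have h2 : 0 < Real.exp (L s - C * (t - s)) * (t - s) :=
    mul_pos (Real.exp_pos _) (by linarith)
  linarith

theorem QI.strictMono {f : Equiv.Perm ℝ} (hf : QI f) : StrictMono f := by
  intro s t hst
  by_cases hs : s ∈ Icc (0:ℝ) 1 <;> by_cases ht : t ∈ Icc (0:ℝ) 1
  · exact hf.strictMonoOn hs ht hst
  · rw [hf.1 t ht]
    have := (hf.mem hs).2
    by_contra h
    exact ht ⟨by linarith [hs.1], by linarith⟩
  · rw [hf.1 s hs]
    have := (hf.mem ht).1
    by_contra h
    exact hs ⟨by linarith, by linarith [ht.2]⟩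
  · rwa [hf.1 s hs, hf.1 t ht]

theorem QI.continuous {f : Equiv.Perm ℝ} (hf : QI f) : Continuous f :=
  (hf.strictMono.orderIsoOfSurjective f f.surjective).continuous

theorem QI.zero {f : Equiv.Perm ℝ} (hf : QI f) : f 0 = 0 := by
  have h0 : (0:ℝ) ∈ Icc (0:ℝ) 1 := by simp
  apply le_antisymm _ (hf.mem h0).1
  have h1 := hf.strictMono.monotone (hf.inv_mem h0).1
  rwa [perm_apply_inv] at h1

theorem QI.one {f : Equiv.Perm ℝ} (hf : QI f) : f 1 = 1 := by
  have h0 : (1:ℝ) ∈ Icc (0:ℝ) 1 := by simp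
  apply le_antisymm (hf.mem h0).2 _
  have h1 := hf.strictMono.monotone (hf.inv_mem h0).2
  rwa [perm_apply_inv] at h1

/-- bi-Lipschitz consequence -/
theorem QI.biLip {f : Equiv.Perm ℝ} (hf : QI f) {L : ℝ → ℝ} {C : ℝ} (hC : 0 ≤ C)
    (h : ∀ s t x : ℝ, 0 ≤ s → s ≤ x → x ≤ t → t ≤ 1 →
    Real.exp (L x - C * (t - s)) * (t - s) ≤ f t - f s ∧
    f t - f s ≤ Real.exp (L x + C * (t - s)) * (t - s)) {s t : ℝ} (hs : 0 ≤ s) (hst : s ≤ t)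
    (ht : t ≤ 1) : Real.exp (-(2 * C)) * (t - s) ≤ f t - f s ∧
      f t - f s ≤ Real.exp (2 * C) * (t - s) := by
  have h1 := h 0 1 s le_rfl hs (hst.trans ht) le_rfl
  rw [hf.zero, hf.one] at h1
  norm_num at h1
  have h2 := h s t s hs le_rfl hst ht
  have h3 : C * (t - s) ≤ C := by nlinarith
  have hn : 0 ≤ t - s := by linarith
  constructor
  · refine le_trans (mul_le_mul_of_nonneg_right (Real.exp_le_exp.2 ?_) hn) h2.1
    linarith
  · refine le_trans h2.2 (mul_le_mul_of_nonneg_right (Real.exp_le_exp.2 ?_) hn)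
    linarith

theorem QI.mul {f g : Equiv.Perm ℝ} (hf : QI f) (hg : QI g) : QI (f * g) := by
  refine ⟨fun x hx => ?_, ?_⟩
  · rw [Equiv.Perm.mul_apply, hg.1 x hx, hf.1 x hx]
  obtain ⟨L, C, hC, h⟩ := hf.2
  obtain ⟨M, D, hD, k⟩ := hg.2
  refine ⟨fun x => L (g x) + M x, C * Real.exp (2 * D) + D, by positivity, ?_⟩
  intro s t x hs hsx hxt ht
  have hst := hsx.trans hxt
  have hm := hg.strictMono.monotone
  have k1 := k s t x hs hsx hxt ht
  have h1 := h (g s) (g t) (g x) (hg.mem ⟨hs, hst.trans ht⟩).1 (hm hsx) (hm hxt)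
    (hg.mem ⟨hs.trans hst, ht⟩).2
  have b := (hg.biLip hD k hs hst ht).2
  have b2 : C * (g t - g s) ≤ C * Real.exp (2 * D) * (t - s) := by
    rw [mul_assoc]; exact mul_le_mul_of_nonneg_left b hC
  simp only [Equiv.Perm.mul_apply]
  have hn : 0 ≤ t - s := by linarith
  constructor
  · refine le_trans ?_ h1.1
    refine le_trans ?_ (mul_le_mul_of_nonneg_left k1.1 (Real.exp_pos _).le)
    rw [← mul_assoc, ← Real.exp_add]
    refine mul_le_mul_of_nonneg_right (Real.exp_le_exp.2 ?_) hn
    linarith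
  · refine le_trans h1.2 ?_
    refine le_trans (mul_le_mul_of_nonneg_left k1.2 (Real.exp_pos _).le) ?_
    rw [← mul_assoc, ← Real.exp_add]
    refine mul_le_mul_of_nonneg_right (Real.exp_le_exp.2 ?_) hn
    linarith

theorem QI.inv {f : Equiv.Perm ℝ} (hf : QI f) : QI f⁻¹ := by
  refine ⟨fun x hx => hf.inv_off hx, ?_⟩
  obtain ⟨L, C, hC, h⟩ := hf.2
  refine ⟨fun x => - L (f⁻¹ x), C * Real.exp (2 * C), by positivity, ?_⟩
  intro s t x hs hsx hxt ht
  have hst := hsx.trans hxt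
  have key : ∀ u v, u ≤ v → f⁻¹ u ≤ f⁻¹ v := by
    intro u v huv
    rw [← hf.strictMono.le_iff_le]; simpa using huv
  have hs' := (hf.inv_mem ⟨hs, hst.trans ht⟩).1
  have ht' := (hf.inv_mem ⟨hs.trans hst, ht⟩).2
  have h1 := h _ _ _ hs' (key _ _ hsx) (key _ _ hxt) ht'
  have b := (hf.biLip hC h hs' (key _ _ hst) ht').1
  simp only [perm_apply_inv] at h1 b
  have hn : 0 ≤ t - s := by linarith
  set w := f⁻¹ t - f⁻¹ s
  have b1 : w ≤ Real.exp (2 * C) * (t - s) := by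
    rw [Real.exp_neg, inv_mul_le_iff₀ (Real.exp_pos _)] at b
    exact b
  have b2 : C * w ≤ C * Real.exp (2 * C) * (t - s) := by
    rw [mul_assoc]; exact mul_le_mul_of_nonneg_left b1 hC
  have e : ∀ θ, Real.exp (-θ) * (Real.exp θ * w) = w := by
    intro θ; rw [← mul_assoc, ← Real.exp_add]; simp
  constructor
  · rw [← e (L (f⁻¹ x) + C * w)]
    refine le_trans ?_ (mul_le_mul_of_nonneg_left h1.2 (Real.exp_pos _).le)
    refine mul_le_mul_of_nonneg_right (Real.exp_le_exp.2 ?_) hn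
    linarith
  · rw [← e (L (f⁻¹ x) - C * w)]
    refine le_trans (mul_le_mul_of_nonneg_left h1.1 (Real.exp_pos _).le) ?_
    refine mul_le_mul_of_nonneg_right (Real.exp_le_exp.2 ?_) hn
    linarith

theorem QI.one' : QI 1 := by
  refine ⟨fun x _ => rfl, fun _ => 0, 0, le_rfl, ?_⟩
  intro s t x _ _ _ _
  simp

theorem QI.pow {f : Equiv.Perm ℝ} (hf : QI f) (n : ℕ) : QI (f ^ n) := by
  induction n with
  | zero => simpa using QI.one'
  | succ k ih => rw [pow_succ]; exact ih.mul hf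

theorem IsDiffI.qi {f : Equiv.Perm ℝ} (hf : IsDiffI f) : QI f := by
  obtain ⟨h0, h1, h2⟩ := hf
  refine ⟨h0, ?_⟩
  have hu : UniqueDiffOn ℝ (Icc (0:ℝ) 1) := uniqueDiffOn_Icc zero_lt_one
  have hd : ContDiffOn ℝ 1 (derivWithin f (Icc 0 1)) (Icc 0 1) :=
    h1.derivWithin hu (by norm_num)
  have hl : ContDiffOn ℝ 1 (fun x => Real.log (derivWithin f (Icc 0 1) x)) (Icc 0 1) :=
    hd.log (fun x hx => (h2 x hx).ne')
  obtain ⟨K, hK⟩ := (hl.locallyLipschitzOn (convex_Icc _ _)).exists_lipschitzOnWith_of_compact isCompact_Icc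
  refine ⟨fun x => Real.log (derivWithin f (Icc 0 1) x), K, K.2, ?_⟩
  intro s t x hs hsx hxt ht
  rcases (hsx.trans hxt).eq_or_lt with rfl | hst
  · simp
  have hsub : Icc s t ⊆ Icc 0 1 := Icc_subset_Icc hs ht
  obtain ⟨ξ, hξ, e⟩ := exists_deriv_eq_slope f hst (h1.continuousOn.mono hsub)
    ((h1.differentiableOn (by norm_num)).mono (Ioo_subset_Icc_self.trans hsub))
  have hξ' : ξ ∈ Icc (0:ℝ) 1 := hsub (Ioo_subset_Icc_self hξ)
  have e2 : derivWithin f (Icc 0 1) ξ = deriv f ξ :=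
    derivWithin_of_mem_nhds (Icc_mem_nhds (by linarith [hξ.1]) (by linarith [hξ.2]))
  have e3 : f t - f s = Real.exp (Real.log (derivWithin f (Icc 0 1) ξ)) * (t - s) := by
    rw [Real.exp_log (h2 _ hξ'), e2, e]
    field_simp [sub_ne_zero.2 hst.ne']
  have hlip := hK.dist_le_mul ξ hξ' x (hsub ⟨hsx, hxt⟩)
  rw [Real.dist_eq, Real.dist_eq] at hlip
  have h3 : |ξ - x| ≤ t - s := by
    rw [abs_le]; constructor <;> linarith [hξ.1, hξ.2]
  have h4 := abs_le.1 (hlip.trans (mul_le_mul_of_nonneg_left h3 K.2))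
  rw [e3]
  have hn : 0 ≤ t - s := by linarith
  constructor <;> refine mul_le_mul_of_nonneg_right (Real.exp_le_exp.2 ?_) hn
  · linarith [h4.1]
  · linarith [h4.2]

theorem QI.orbit {f : Equiv.Perm ℝ} (hf : QI f) {y : ℝ} (hy : f y < y) :
    ∃ a, Antitone (fun j : ℕ => (f ^ j) y) ∧ Tendsto (fun j : ℕ => (f ^ j) y) atTop (𝓝 a) ∧
      f a = a ∧ a < y ∧ (∀ j : ℕ, a ≤ (f ^ j) y) ∧ 0 ≤ a ∧ y ≤ 1 := by
  have hyI : y ∈ Icc (0:ℝ) 1 := by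
    by_contra h
    exact hy.ne (hf.1 y h)
  have hanti : Antitone (fun j : ℕ => (f ^ j) y) := by
    refine antitone_nat_of_succ_le fun j => ?_
    rw [pow_succ, Equiv.Perm.mul_apply]
    exact (hf.pow j).strictMono.monotone hy.le
  have h0 : ∀ j : ℕ, 0 ≤ (f ^ j) y := fun j => ((hf.pow j).mem hyI).1
  have hb : BddBelow (range (fun j : ℕ => (f ^ j) y)) :=
    ⟨0, by rintro _ ⟨j, rfl⟩; exact h0 j⟩
  have ht := tendsto_atTop_ciInf hanti hb
  have hle : ∀ j : ℕ, (⨅ i : ℕ, (f ^ i) y) ≤ (f ^ j) y := fun j => ciInf_le hb j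
  refine ⟨_, hanti, ht, ?_, ?_, hle, le_ciInf h0, hyI.2⟩
  · have h1 := (hf.continuous.tendsto _).comp ht
    have h2 := (tendsto_add_atTop_iff_nat 1).2 ht
    refine tendsto_nhds_unique h1 (h2.congr fun j => ?_)
    simp [pow_succ', Equiv.Perm.mul_apply]
  · have := hle 1
    rw [pow_one] at this
    linarith

theorem QI.pow_fix {f : Equiv.Perm ℝ} {a : ℝ} (h : f a = a) (n : ℕ) : (f ^ n) a = a := by
  induction n with
  | zero => simp
  | succ k ih => rw [pow_succ, Equiv.Perm.mul_apply, h, ih]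

/-- distortion estimate along the orbit of a fundamental domain -/
theorem QI.distort {f : Equiv.Perm ℝ} (hf : QI f) {p y : ℝ} (hp : 0 ≤ p) (hy : y ≤ 1)
    (hpy : p < y) (hfy : f y ≤ p) : ∃ C : ℝ, 0 ≤ C ∧ ∀ (j : ℕ) (t : ℝ), p ≤ t → t ≤ y →
    ((f ^ j) t - (f ^ j) p) * (y - p) ≤
      Real.exp (2 * C * (y - (f ^ j) y)) * (((f ^ j) y - (f ^ j) p) * (t - p)) := by
  obtain ⟨L, C, hC, h⟩ := hf.2
  refine ⟨C, hC, ?_⟩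
  intro j t hpt hty
  induction j with
  | zero => simp; linarith
  | succ j ih =>
    have hm := (hf.pow j).strictMono.monotone
    have hA := hm hpt
    have hB := hm hty
    have h0 : 0 ≤ (f ^ j) p := ((hf.pow j).mem ⟨hp, hpy.le.trans hy⟩).1
    have h1 : (f ^ j) y ≤ 1 := ((hf.pow j).mem ⟨hp.trans hpy.le, hy⟩).2
    have hF : (f ^ (j+1)) y ≤ (f ^ j) p := by
      rw [pow_succ, Equiv.Perm.mul_apply]; exact hm hfy
    have u1 := (h _ _ _ h0 le_rfl hA (hB.trans h1)).2
    have u2 := (h _ _ _ h0 le_rfl (hA.trans hB) h1).1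
    have e : ∀ z, (f ^ (j+1)) z = f ((f ^ j) z) := fun z => by
      rw [pow_succ', Equiv.Perm.mul_apply]
    rw [e y] at hF
    rw [e, e, e]
    set A := (f ^ j) t - (f ^ j) p with hAdef
    set B := (f ^ j) y - (f ^ j) p with hBdef
    set l := L ((f ^ j) p)
    have hAB : A ≤ B := by linarith
    have hA0 : 0 ≤ A := by linarith
    have v1 : f ((f ^ j) t) - f ((f ^ j) p) ≤ Real.exp (l + C * B) * A := by
      refine u1.trans (mul_le_mul_of_nonneg_right (Real.exp_le_exp.2 ?_) hA0)
      have := mul_le_mul_of_nonneg_left hAB hC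
      linarith
    have v2 : B ≤ Real.exp (-(l - C * B)) * (f ((f ^ j) y) - f ((f ^ j) p)) := by
      have := mul_le_mul_of_nonneg_left u2 (Real.exp_pos (-(l - C * B))).le
      rwa [← mul_assoc, ← Real.exp_add, neg_add_cancel, Real.exp_zero, one_mul] at this
    have hB'0 : 0 ≤ f ((f ^ j) y) - f ((f ^ j) p) := by
      have := hf.strictMono.monotone (hA.trans hB)
      linarith
    set A' := f ((f ^ j) t) - f ((f ^ j) p)
    set B' := f ((f ^ j) y) - f ((f ^ j) p)
    have htp : 0 ≤ t - p := by linarith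
    calc A' * (y - p) ≤ (Real.exp (l + C * B) * A) * (y - p) :=
          mul_le_mul_of_nonneg_right v1 (by linarith)
      _ = Real.exp (l + C * B) * (A * (y - p)) := by ring
      _ ≤ Real.exp (l + C * B) * (Real.exp (2 * C * (y - (f ^ j) y)) * (B * (t - p))) :=
          mul_le_mul_of_nonneg_left ih (Real.exp_pos _).le
      _ ≤ Real.exp (l + C * B) * (Real.exp (2 * C * (y - (f ^ j) y)) *
            ((Real.exp (-(l - C * B)) * B') * (t - p))) := by gcongr
      _ = Real.exp ((l + C * B) + 2 * C * (y - (f ^ j) y) + (-(l - C * B))) *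
            (B' * (t - p)) := by
          rw [Real.exp_add (_ + _) (-(l - C * B)), Real.exp_add (l + C * B)]; ring
      _ ≤ _ := by
          refine mul_le_mul_of_nonneg_right (Real.exp_le_exp.2 ?_) (mul_nonneg hB'0 htp)
          have : C * B ≤ C * ((f ^ j) y - f ((f ^ j) y)) :=
            mul_le_mul_of_nonneg_left (by linarith) hC
          linarith

theorem QI.near_fix {c : Equiv.Perm ℝ} (hc : QI c) : ∃ D : ℝ, 0 ≤ D ∧
    ∀ a q z : ℝ, 0 ≤ a → a < q → q ≤ z → z ≤ 1 → c a = a → c q = q →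
    Real.exp (-(D * (z - a))) * (z - q) ≤ c z - q := by
  obtain ⟨L, D, hD, h⟩ := hc.2
  refine ⟨D, hD, ?_⟩
  intro a q z ha haq hqz hz hca hcq
  have h1 := (h a q q ha haq.le le_rfl (hqz.trans hz)).2
  rw [hca, hcq] at h1
  have h2 := (h q z q (ha.trans haq.le) le_rfl hqz hz).1
  rw [hcq] at h2
  have h3 : 0 ≤ L q + D * (q - a) := by
    rw [← Real.one_le_exp_iff]
    by_contra hcon
    push Not at hcon
    nlinarith
  refine le_trans (mul_le_mul_of_nonneg_right (Real.exp_le_exp.2 ?_) (by linarith)) h2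
  linarith

theorem kopell_core {f c : Equiv.Perm ℝ} (hf : QI f) (hc : QI c) (hfc : Commute f c)
    {a p y : ℝ} (ha : 0 ≤ a) (hy : y ≤ 1) (hap : a < p) (hpy : p < y) (hfa : f a = a)
    (hca : c a = a) (hcp : c p = p) (hfy : f y ≤ p)
    (htf : Tendsto (fun j : ℕ => (f ^ j) y) atTop (𝓝 a))
    (htc : Tendsto (fun j : ℕ => (c ^ j) y) atTop (𝓝 p)) (hcy : c y ≤ y) : False := by
  obtain ⟨C, hC, dist⟩ := hf.distort (ha.trans hap.le) hy hpy hfy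
  obtain ⟨D, hD, near⟩ := hc.near_fix
  have hcl : ∀ l : ℕ, p ≤ (c ^ l) y ∧ (c ^ l) y ≤ y := by
    intro l
    constructor
    · have := (hc.pow l).strictMono.monotone hpy.le
      rwa [QI.pow_fix hcp] at this
    · induction l with
      | zero => simp
      | succ k ih =>
        rw [pow_succ', Equiv.Perm.mul_apply]
        exact (hc.strictMono.monotone ih).trans hcy
  have comm : ∀ (j : ℕ) z, (f ^ j) (c z) = c ((f ^ j) z) := by
    intro j z
    have := (hfc.pow_left j).eq
    exact congrArg (fun e : Equiv.Perm ℝ => e z) this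
  have low : ∀ (j l : ℕ), Real.exp (-(l * (D * ((f ^ j) y - a)))) * ((f ^ j) y - (f ^ j) p) ≤
      (f ^ j) ((c ^ l) y) - (f ^ j) p := by
    intro j l
    have hm := (hf.pow j).strictMono
    induction l with
    | zero => simp
    | succ l ih =>
      have hap' : a < (f ^ j) p := by
        have := hm hap
        rwa [QI.pow_fix hfa] at this
      have hz1 : (f ^ j) y ≤ 1 := ((hf.pow j).mem ⟨by linarith, hy⟩).2
      have hzy := hm.monotone (hcl l).2
      have hpz := hm.monotone (hcl l).1
      have n := near a ((f ^ j) p) ((f ^ j) ((c ^ l) y)) ha hap' hpz (hzy.trans hz1) hca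
        (by rw [← comm, hcp])
      rw [← comm] at n
      rw [pow_succ' c, Equiv.Perm.mul_apply]
      refine le_trans ?_ n
      have e1 : Real.exp (-(D * ((f ^ j) y - a))) ≤
          Real.exp (-(D * ((f ^ j) ((c ^ l) y) - a))) := by
        rw [Real.exp_le_exp]
        have := mul_le_mul_of_nonneg_left hzy hD
        linarith
      calc _ = Real.exp (-(D * ((f ^ j) y - a))) *
            (Real.exp (-(l * (D * ((f ^ j) y - a)))) * ((f ^ j) y - (f ^ j) p)) := by
            rw [← mul_assoc (Real.exp _), ← Real.exp_add]
            congr 2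
            push_cast; ring
        _ ≤ Real.exp (-(D * ((f ^ j) y - a))) * ((f ^ j) ((c ^ l) y) - (f ^ j) p) :=
            mul_le_mul_of_nonneg_left ih (Real.exp_pos _).le
        _ ≤ _ := mul_le_mul_of_nonneg_right e1 (by linarith)
  have comb : ∀ (l j : ℕ), Real.exp (-(l * (D * ((f ^ j) y - a)))) * (y - p) ≤
      Real.exp (2 * C) * ((c ^ l) y - p) := by
    intro l j
    have h1 := dist j _ (hcl l).1 (hcl l).2
    have h2 := mul_le_mul_of_nonneg_right (low j l) (by linarith : 0 ≤ y - p)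
    have hB : 0 < (f ^ j) y - (f ^ j) p := by
      have := (hf.pow j).strictMono hpy
      linarith
    have hz0 : 0 ≤ (f ^ j) y := ((hf.pow j).mem ⟨by linarith, hy⟩).1
    have h3 : Real.exp (2 * C * (y - (f ^ j) y)) ≤ Real.exp (2 * C) := by
      rw [Real.exp_le_exp]
      nlinarith
    have h4 : 0 ≤ ((f ^ j) y - (f ^ j) p) * ((c ^ l) y - p) :=
      mul_nonneg hB.le (by linarith [(hcl l).1])
    have h5 := mul_le_mul_of_nonneg_right h3 h4
    refine le_of_mul_le_mul_right ?_ hB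
    calc _ = _ := by ring
      _ ≤ _ := h2.trans (h1.trans h5)
      _ = _ := by ring
  have comb2 : ∀ l : ℕ, y - p ≤ Real.exp (2 * C) * ((c ^ l) y - p) := by
    intro l
    have t1 : Tendsto (fun j : ℕ => Real.exp (-(l * (D * ((f ^ j) y - a)))) * (y - p)) atTop
        (𝓝 (Real.exp (-(l * (D * (a - a)))) * (y - p))) := by
      have hcont : Continuous (fun z : ℝ => Real.exp (-(l * (D * (z - a)))) * (y - p)) := by
        fun_prop
      exact (hcont.tendsto a).comp htf
    have := le_of_tendsto' t1 (comb l)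
    simpa using this
  have t2 : Tendsto (fun l : ℕ => Real.exp (2 * C) * ((c ^ l) y - p)) atTop
      (𝓝 (Real.exp (2 * C) * (p - p))) := (htc.sub_const p).const_mul _
  have := ge_of_tendsto' t2 comb2
  simp at this
  linarith

theorem squeeze_orbit {f : Equiv.Perm ℝ} (hf : QI f) {a x y : ℝ} (hfa : f a = a)
    (hax : a ≤ x) (hxy : x ≤ y) (htf : Tendsto (fun j : ℕ => (f ^ j) y) atTop (𝓝 a)) :
    Tendsto (fun j : ℕ => (f ^ j) x) atTop (𝓝 a) := by
  refine tendsto_of_tendsto_of_tendsto_of_le_of_le tendsto_const_nhds htf ?_ ?_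
  · intro j
    have := (hf.pow j).strictMono.monotone hax
    rwa [QI.pow_fix hfa] at this
  · intro j
    exact (hf.pow j).strictMono.monotone hxy

theorem commute_apply {f c : Equiv.Perm ℝ} (h : Commute f c) (z : ℝ) : f (c z) = c (f z) :=
  congrArg (fun e : Equiv.Perm ℝ => e z) h.eq

/-- Kopell's lemma, one direction. -/
theorem kopell_lt {f c : Equiv.Perm ℝ} (hf : QI f) (hc : QI c) (hfc : Commute f c)
    {a x y : ℝ} (ha : 0 ≤ a) (hy : y ≤ 1) (hax : a < x) (hxy : x ≤ y) (hfa : f a = a)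
    (hcx : c x = x)
    (htf : Tendsto (fun j : ℕ => (f ^ j) y) atTop (𝓝 a)) : ¬ c y < y := by
  intro hcy
  obtain ⟨p, -, htc, hcp, hpy, hple, -, -⟩ := hc.orbit hcy
  have hxp : x ≤ p := by
    refine ge_of_tendsto' htc fun l => ?_
    have := (hc.pow l).strictMono.monotone hxy
    rwa [QI.pow_fix hcx] at this
  have hap : a < p := hax.trans_le hxp
  have hca : c a = a := by
    have t := squeeze_orbit hf hfa hax.le hxy htf
    refine tendsto_nhds_unique ((hc.continuous.tendsto _).comp t) (t.congr fun j => ?_)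
    simp only [Function.comp]
    rw [← commute_apply (hfc.pow_left j), hcx]
  obtain ⟨N, hN⟩ := (htf.eventually (gt_mem_nhds hap)).exists
  have hN0 : N ≠ 0 := by
    rintro rfl
    simp at hN
    linarith
  refine kopell_core (hf.pow N) hc (hfc.pow_left N) ha hy hap hpy (QI.pow_fix hfa N) hca hcp
    hN.le ?_ htc hcy.le
  have t := htf.comp (tendsto_id.const_mul_atTop' (Nat.pos_of_ne_zero hN0))
  refine t.congr fun j => ?_
  simp [pow_mul]

theorem kopell {f c : Equiv.Perm ℝ} (hf : QI f) (hc : QI c) (hfc : Commute f c)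
    {a x y : ℝ} (ha : 0 ≤ a) (hy : y ≤ 1) (hax : a < x) (hxy : x ≤ y) (hfa : f a = a)
    (hcx : c x = x)
    (htf : Tendsto (fun j : ℕ => (f ^ j) y) atTop (𝓝 a)) : c y = y := by
  have h1 := kopell_lt hf hc hfc ha hy hax hxy hfa hcx htf
  have h2 := kopell_lt hf hc.inv hfc.inv_right ha hy hax hxy hfa
    (by rw [Equiv.Perm.inv_eq_iff_eq]; exact hcx.symm) htf
  refine le_antisymm ?_ (not_lt.1 h1)
  have := hc.strictMono.monotone (not_lt.1 h2)
  rwa [perm_apply_inv] at this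

theorem pow_lt_iff {f : Equiv.Perm ℝ} (hf : QI f) {n : ℕ} (hn : 0 < n) (y : ℝ) :
    (f ^ n) y < y ↔ f y < y := by
  have := (Function.Commute.id_right (f := f)).iterate_pos_lt_iff_map_lt
    hf.strictMono.monotone strictMono_id (x := y) hn
  simpa [Equiv.Perm.iterate_eq_pow] using this

theorem pow_eq_iff' {f : Equiv.Perm ℝ} (hf : QI f) {n : ℕ} (hn : 0 < n) (y : ℝ) :
    (f ^ n) y = y ↔ f y = y := by
  have := (Function.Commute.id_right (f := f)).iterate_pos_eq_iff_map_eq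
    hf.strictMono.monotone strictMono_id (x := y) hn
  simpa [Equiv.Perm.iterate_eq_pow] using this

/-- Order argument: `k h` cannot be strictly below `h k` all along the `k`-orbit. -/
theorem order_arg {h k : Equiv.Perm ℝ} (hk : StrictMono k) {m : ℕ} (hm : 0 < m)
    (hcomm : Commute h (k ^ m)) {y : ℝ} 
    (H : ∀ i : ℕ, k (h ((k ^ i) y)) < h (k ((k ^ i) y))) : False := by
  have key : ∀ i : ℕ, (k ^ (i+1)) (h y) < h ((k ^ (i+1)) y) := by
    intro i
    induction i with
    | zero => simpa using H 0
    | succ i ih =>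
      rw [pow_succ' k (i+1), Equiv.Perm.mul_apply, Equiv.Perm.mul_apply]
      exact (hk ih).trans (H (i+1))
  obtain ⟨i, rfl⟩ : ∃ i, m = i + 1 := ⟨m - 1, by omega⟩
  have := key i
  rw [commute_apply hcomm] at this
  exact lt_irrefl _ this

theorem order_arg' {h k : Equiv.Perm ℝ} (hk : StrictMono k) {m : ℕ} (hm : 0 < m)
    (hcomm : Commute h (k ^ m)) {y : ℝ} 
    (H : ∀ i : ℕ, h (k ((k ^ i) y)) < k (h ((k ^ i) y))) : False := by
  have key : ∀ i : ℕ, h ((k ^ (i+1)) y) < (k ^ (i+1)) (h y) := by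
    intro i
    induction i with
    | zero => simpa using H 0
    | succ i ih =>
      rw [pow_succ' k (i+1), Equiv.Perm.mul_apply, Equiv.Perm.mul_apply]
      exact (H (i+1)).trans (hk ih)
  obtain ⟨i, rfl⟩ : ∃ i, m = i + 1 := ⟨m - 1, by omega⟩
  have := key i
  rw [commute_apply hcomm] at this
  exact lt_irrefl _ this

theorem main_lt {h k : Equiv.Perm ℝ} (hh : QI h) (hk : QI k) {m n : ℕ} (hm : 0 < m)
    (hrel : k ^ m = h ^ n) {y : ℝ} (hy : (h ^ n) y < y) : h (k y) = k (h y) := by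
  have hf := hh.pow n
  obtain ⟨a, -, htf, hfa, hay, -, ha, hy1⟩ := hf.orbit hy
  have hka : k a = a := by rw [← pow_eq_iff' hk hm, hrel, hfa]
  have hky : k y < y := by rw [← pow_lt_iff hk hm, hrel]; exact hy
  have hki : ∀ i : ℕ, (k ^ i) y ∈ Ioc a y := by
    intro i
    constructor
    · have := (hk.pow i).strictMono hay
      rwa [QI.pow_fix hka] at this
    · induction i with
      | zero => simp
      | succ i ih =>
        rw [pow_succ', Equiv.Perm.mul_apply]
        exact (hk.strictMono.monotone ih).trans hky.le
  have hfh : Commute (h ^ n) h := (Commute.refl h).pow_left n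
  have hfk : Commute (h ^ n) k := by rw [← hrel]; exact (Commute.refl k).pow_left m
  have hhk : Commute h (k ^ m) := by rw [hrel]; exact hfh.symm
  -- a coincidence point
  obtain ⟨x, hx, hxe⟩ : ∃ x ∈ Ioc a y, k (h x) = h (k x) := by
    by_contra! hne
    have hc1 : Continuous (fun x => k (h x)) := hk.continuous.comp hh.continuous
    have hc2 : Continuous (fun x => h (k x)) := hh.continuous.comp hk.continuous
    have hpre : IsPreconnected (Ioc a y) := isPreconnected_Ioc
    by_cases hlt : ∀ x ∈ Ioc a y, k (h x) < h (k x)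
    · exact order_arg hk.strictMono hm hhk fun i => hlt _ (hki i)
    by_cases hgt : ∀ x ∈ Ioc a y, h (k x) < k (h x)
    · exact order_arg' hk.strictMono hm hhk fun i => hgt _ (hki i)
    push Not at hlt hgt
    obtain ⟨u, hu, hu'⟩ := hlt
    obtain ⟨v, hv, hv'⟩ := hgt
    obtain ⟨w, hw, hw'⟩ := hpre.intermediate_value₂ hv hu hc1.continuousOn hc2.continuousOn hv' hu'
    exact hne w hw hw'
  have hcx : ((h * k)⁻¹ * (k * h)) x = x := by
    rw [Equiv.Perm.mul_apply, Equiv.Perm.inv_eq_iff_eq]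
    exact hxe
  have hcom : Commute (h ^ n) ((h * k)⁻¹ * (k * h)) :=
    ((hfh.mul_right hfk).inv_right).mul_right (hfk.mul_right hfh)
  have := kopell hf ((hh.mul hk).inv.mul (hk.mul hh)) hcom ha hy1 hx.1 hx.2 hfa hcx htf
  rw [Equiv.Perm.mul_apply, Equiv.Perm.inv_eq_iff_eq] at this
  exact this.symm

theorem main_all {h k : Equiv.Perm ℝ} (hh : QI h) (hk : QI k) {m n : ℕ} (hm : 0 < m)
    (hn : 0 < n) (hrel : k ^ m = h ^ n) (y : ℝ) : h (k y) = k (h y) := by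
  rcases lt_trichotomy ((h ^ n) y) y with hy | hy | hy
  · exact main_lt hh hk hm hrel hy
  · have h1 : h y = y := (pow_eq_iff' hh hn y).1 hy
    have h2 : k y = y := by rw [← pow_eq_iff' hk hm, hrel, hy]
    rw [h2, h1, h2]
  · have hfh : Commute (h ^ n) h := (Commute.refl h).pow_left n
    have hfk : Commute (h ^ n) k := by rw [← hrel]; exact (Commute.refl k).pow_left m
    have hz : (h⁻¹ ^ n) (h (k y)) < h (k y) := by
      rw [← (hh.pow n).strictMono.lt_iff_lt, inv_pow, perm_apply_inv,
        commute_apply hfh, commute_apply hfk]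
      exact hh.strictMono (hk.strictMono hy)
    have := main_lt hh.inv hk.inv hm (by rw [inv_pow, inv_pow, hrel]) hz
    have e : k⁻¹ (h⁻¹ (h (k y))) = y := by
      rw [Equiv.Perm.inv_eq_iff_eq, Equiv.Perm.inv_eq_iff_eq]
    rw [e, Equiv.Perm.inv_eq_iff_eq, Equiv.Perm.inv_eq_iff_eq] at this
    exact this

/-- **Baumslag–Solitar relation forces commutation on the interval.** If `g` and `h`
are orientation-preserving C² diffeomorphisms of `I = [0,1]` satisfying
`g ∘ hᵐ ∘ g⁻¹ = hⁿ` for some positive integers `m` and `n`, then `h` and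
`g ∘ h ∘ g⁻¹` commute. -/
theorem bs_relation_commute_on_interval (g h : Equiv.Perm ℝ)
    (hg : IsDiffI g) (hh : IsDiffI h)
    (m n : ℕ) (hm : 0 < m) (hn : 0 < n)
    (hrel : g * h ^ m * g⁻¹ = h ^ n) :
    Commute h (g * h * g⁻¹) := by
  have hk : QI (g * h * g⁻¹) := (hg.qi.mul hh.qi).mul hg.qi.inv
  have hr : (g * h * g⁻¹) ^ m = h ^ n := by rw [conj_pow, hrel]
  exact Equiv.ext fun y => main_all hh.qi hk hm hn hr y
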